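/- arXiv:1906.00729 — 2 statements merged into one kernel-verified Lean document; each statement's English description precedes it below -/
import Mathlib

section
/- Suppose (K,L) is stabilizing and write P := P_{K,L}. Then for all x ∈ ℝ^d and all K′ ∈ ℝ^{m₁×d}, L′ ∈ ℝ^{m₂×d}: A_{K,L}(x, −K′x, −L′x) = 2xᵀ(K′−K)ᵀE_{K,L}x + xᵀ(K′−K)ᵀ(Rᵘ + BᵀPB)(K′−K)x + 2xᵀ(L′−L)ᵀF_{K,L}x + xᵀ(L′−L)ᵀ(−Rᵛ + CᵀPC)(L′−L)x + 2xᵀ(L′−L)ᵀCᵀPB(K′−K)x. -/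
/-!
The advantage `A_{K,L}(x, -K'x, -L'x)` is a quadratic function of `(K' - K, L' - L)`, and the identity
is its expansion around `(K, L)`. With `y = (A - BK - CL)x`, `a = (K' - K)x`, `b = (L' - L)x`, the next
state is `y - Ba - Cb`, and `E_{K,L}x = RᵘKx - BᵀPy`, `F_{K,L}x = -RᵛLx - CᵀPy`. Expanding the
quadratic forms, the first- and second-order terms in `(a, b)` are the right-hand side, provided
`P`, `Rᵘ`, `Rᵛ` are symmetric; the zeroth-order term vanishes by the Lyapunov equation
`P = Q + KᵀRᵘK - LᵀRᵛL + (A - BK - CL)ᵀ P (A - BK - CL)`.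

The analytic content is that the series defining `P` converges when the spectral radius of the
closed-loop matrix is less than one: Gelfand's formula makes the powers of the closed-loop matrix
decay geometrically in the Frobenius norm, which is invariant under transposition and under
complexification. The Lyapunov equation then follows by splitting off the term `t = 0`.
-/

open Matrix

noncomputable section

/-- Spectral radius of a real square matrix: the spectral radius of its complexification. -/
def specRad {n : ℕ} (M : Matrix (Fin n) (Fin n) ℝ) : ENNReal :=
  spectralRadius ℂ (M.map (algebraMap ℝ ℂ))

/-- Spectral (operator 2-) norm of a real matrix. -/
def specNorm {m n : ℕ} (M : Matrix (Fin m) (Fin n) ℝ) : ℝ :=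
  ‖LinearMap.toContinuousLinearMap (Matrix.toEuclideanLin M)‖

/-- Smallest (real) eigenvalue of a matrix, as the infimum of its real spectrum. -/
def lamMin {n : ℕ} (M : Matrix (Fin n) (Fin n) ℝ) : ℝ :=
  sInf (spectrum ℝ M)

/-- The data of a zero-sum LQ game. -/
structure LQ (d m₁ m₂ : ℕ) where
  A : Matrix (Fin d) (Fin d) ℝ
  B : Matrix (Fin d) (Fin m₁) ℝ
  C : Matrix (Fin d) (Fin m₂) ℝ
  Q : Matrix (Fin d) (Fin d) ℝ
  Ru : Matrix (Fin m₁) (Fin m₁) ℝ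
  Rv : Matrix (Fin m₂) (Fin m₂) ℝ
  hQ : Q.PosDef
  hRu : Ru.PosDef
  hRv : Rv.PosDef

namespace LQ

variable {d m₁ m₂ : ℕ} (S : LQ d m₁ m₂)

/-- Closed-loop matrix `A - B*K - C*L`. -/
def cl (K : Matrix (Fin m₁) (Fin d) ℝ) (L : Matrix (Fin m₂) (Fin d) ℝ) :
    Matrix (Fin d) (Fin d) ℝ :=
  S.A - S.B * K - S.C * L

/-- A pair `(K, L)` is stabilizing if `ρ(A - BK - CL) < 1`. -/
def IsStabilizing (K : Matrix (Fin m₁) (Fin d) ℝ) (L : Matrix (Fin m₂) (Fin d) ℝ) : Prop :=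
  specRad (S.cl K L) < 1

/-- `P_{K,L} = Σ_{t≥0} ((A-BK-CL)ᵀ)ᵗ (Q + KᵀRᵘK - LᵀRᵛL) (A-BK-CL)ᵗ`. -/
def P (K : Matrix (Fin m₁) (Fin d) ℝ) (L : Matrix (Fin m₂) (Fin d) ℝ) :
    Matrix (Fin d) (Fin d) ℝ :=
  ∑' t : ℕ, ((S.cl K L)ᵀ) ^ t * (S.Q + Kᵀ * S.Ru * K - Lᵀ * S.Rv * L) * (S.cl K L) ^ t

/-- `Σ_{K,L} = Σ_{t≥0} (A-BK-CL)ᵗ Sig0 ((A-BK-CL)ᵀ)ᵗ`. -/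
def Sig (Sig0 : Matrix (Fin d) (Fin d) ℝ) (K : Matrix (Fin m₁) (Fin d) ℝ)
    (L : Matrix (Fin m₂) (Fin d) ℝ) : Matrix (Fin d) (Fin d) ℝ :=
  ∑' t : ℕ, (S.cl K L) ^ t * Sig0 * ((S.cl K L)ᵀ) ^ t

/-- The cost `C(K,L) = tr(Sig0 P_{K,L})`. -/
def cost (Sig0 : Matrix (Fin d) (Fin d) ℝ) (K : Matrix (Fin m₁) (Fin d) ℝ)
    (L : Matrix (Fin m₂) (Fin d) ℝ) : ℝ :=
  (Sig0 * S.P K L).trace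

/-- `E_{K,L} = (Rᵘ + Bᵀ P_{K,L} B) K - Bᵀ P_{K,L} (A - CL)`. -/
def E (K : Matrix (Fin m₁) (Fin d) ℝ) (L : Matrix (Fin m₂) (Fin d) ℝ) :
    Matrix (Fin m₁) (Fin d) ℝ :=
  (S.Ru + (S.B)ᵀ * S.P K L * S.B) * K - (S.B)ᵀ * S.P K L * (S.A - S.C * L)

/-- `F_{K,L} = (-Rᵛ + Cᵀ P_{K,L} C) L - Cᵀ P_{K,L} (A - BK)`. -/
def F (K : Matrix (Fin m₁) (Fin d) ℝ) (L : Matrix (Fin m₂) (Fin d) ℝ) :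
    Matrix (Fin m₂) (Fin d) ℝ :=
  (-S.Rv + (S.C)ᵀ * S.P K L * S.C) * L - (S.C)ᵀ * S.P K L * (S.A - S.B * K)

/-- The value function `V_{K,L}(x) = xᵀ P_{K,L} x`. -/
def V (K : Matrix (Fin m₁) (Fin d) ℝ) (L : Matrix (Fin m₂) (Fin d) ℝ) (x : Fin d → ℝ) : ℝ :=
  x ⬝ᵥ (S.P K L *ᵥ x)

/-- The advantage function `A_{K,L}(x,u,v)`. -/
def Adv (K : Matrix (Fin m₁) (Fin d) ℝ) (L : Matrix (Fin m₂) (Fin d) ℝ)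
    (x : Fin d → ℝ) (u : Fin m₁ → ℝ) (v : Fin m₂ → ℝ) : ℝ :=
  x ⬝ᵥ (S.Q *ᵥ x) + u ⬝ᵥ (S.Ru *ᵥ u) - v ⬝ᵥ (S.Rv *ᵥ v)
    + (S.A *ᵥ x + S.B *ᵥ u + S.C *ᵥ v) ⬝ᵥ (S.P K L *ᵥ (S.A *ᵥ x + S.B *ᵥ u + S.C *ᵥ v))
    - x ⬝ᵥ (S.P K L *ᵥ x)

/-- `Ã_L = A - CL`. -/
def At (L : Matrix (Fin m₂) (Fin d) ℝ) : Matrix (Fin d) (Fin d) ℝ := S.A - S.C * L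

/-- `P` satisfies the inner Riccati equation for `L`. -/
def Riccati (L : Matrix (Fin m₂) (Fin d) ℝ) (P : Matrix (Fin d) (Fin d) ℝ) : Prop :=
  P = (S.Q - Lᵀ * S.Rv * L) + (S.At L)ᵀ * P * S.At L
      - (S.At L)ᵀ * P * S.B * (S.Ru + (S.B)ᵀ * P * S.B)⁻¹ * (S.B)ᵀ * P * S.At L

/-- `K_P(L) = (Rᵘ + BᵀPB)⁻¹ BᵀP Ã_L`. -/
def KP (L : Matrix (Fin m₂) (Fin d) ℝ) (P : Matrix (Fin d) (Fin d) ℝ) :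
    Matrix (Fin m₁) (Fin d) ℝ :=
  (S.Ru + (S.B)ᵀ * P * S.B)⁻¹ * (S.B)ᵀ * P * S.At L

/-- `F_P(L) = (-Rᵛ + CᵀPC) L - CᵀP (A - B K_P(L))`. -/
def FP (L : Matrix (Fin m₂) (Fin d) ℝ) (P : Matrix (Fin d) (Fin d) ℝ) :
    Matrix (Fin m₂) (Fin d) ℝ :=
  (-S.Rv + (S.C)ᵀ * P * S.C) * L - (S.C)ᵀ * P * (S.A - S.B * S.KP L P)

/-- `W_P(L) = Rᵛ - Cᵀ[P - PB(Rᵘ + BᵀPB)⁻¹BᵀP]C`. -/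
def WP (L : Matrix (Fin m₂) (Fin d) ℝ) (P : Matrix (Fin d) (Fin d) ℝ) :
    Matrix (Fin m₂) (Fin m₂) ℝ :=
  S.Rv - (S.C)ᵀ * (P - P * S.B * (S.Ru + (S.B)ᵀ * P * S.B)⁻¹ * (S.B)ᵀ * P) * S.C

end LQ

section Summability

attribute [local instance] Matrix.frobeniusNormedRing Matrix.frobeniusNormedAlgebra

/-- Gelfand's formula for the complexification of `M`, read back in the Frobenius norm of `M`. -/
theorem exists_norm_pow_le_of_specRad_lt_one {n : ℕ} (M : Matrix (Fin n) (Fin n) ℝ)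
    (h : specRad M < 1) :
    ∃ r : ℝ, 0 ≤ r ∧ r < 1 ∧ ∀ᶠ t : ℕ in Filter.atTop, ‖M ^ t‖ ≤ r ^ t := by
  have : CompleteSpace (Matrix (Fin n) (Fin n) ℂ) := FiniteDimensional.complete ℂ _
  obtain ⟨r, hr, hr1⟩ := ENNReal.lt_iff_exists_nnreal_btwn.1 h
  refine ⟨r, r.2, by exact_mod_cast hr1, ?_⟩
  have hG := spectrum.pow_nnnorm_pow_one_div_tendsto_nhds_spectralRadius
    (M.map (algebraMap ℝ ℂ))
  filter_upwards [hG.eventually (gt_mem_nhds hr), Filter.eventually_gt_atTop 0] with t ht ht0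
  have hpow : ((M ^ t).map (algebraMap ℝ ℂ)) = (M.map (algebraMap ℝ ℂ)) ^ t :=
    map_pow (algebraMap ℝ ℂ).mapMatrix M t
  have hnorm : ‖(M ^ t).map (algebraMap ℝ ℂ)‖₊ = ‖M ^ t‖₊ :=
    Matrix.frobenius_nnnorm_map_eq _ _ fun x => by simp
  rw [← hpow, hnorm, one_div, ENNReal.rpow_inv_lt_iff (by exact_mod_cast ht0),
    ENNReal.rpow_natCast] at ht
  exact_mod_cast ht.le

theorem summable_lyapunov {n : ℕ} (M N : Matrix (Fin n) (Fin n) ℝ) (h : specRad M < 1) :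
    Summable fun t : ℕ => (Mᵀ) ^ t * N * M ^ t := by
  obtain ⟨r, hr0, hr1, hr⟩ := exists_norm_pow_le_of_specRad_lt_one M h
  have hg : Summable fun t : ℕ => ‖N‖ * (r * r) ^ t :=
    (summable_geometric_of_lt_one (by positivity) (by nlinarith)).mul_left _
  have : CompleteSpace (Matrix (Fin n) (Fin n) ℝ) := FiniteDimensional.complete ℝ _
  refine Summable.of_norm_bounded_eventually_nat hg ?_
  filter_upwards [hr] with t ht
  have hT : ‖(Mᵀ) ^ t‖ ≤ r ^ t := by
    rw [← Matrix.transpose_pow, Matrix.frobenius_norm_transpose]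
    exact ht
  calc ‖(Mᵀ) ^ t * N * M ^ t‖ ≤ ‖(Mᵀ) ^ t‖ * ‖N‖ * ‖M ^ t‖ :=
        (norm_mul_le _ _).trans (by gcongr; exact norm_mul_le _ _)
    _ ≤ r ^ t * ‖N‖ * r ^ t := by gcongr
    _ = ‖N‖ * (r * r) ^ t := by rw [mul_pow]; ring

end Summability

namespace LQ

variable {d m₁ m₂ : ℕ} (S : LQ d m₁ m₂)
  (K : Matrix (Fin m₁) (Fin d) ℝ) (L : Matrix (Fin m₂) (Fin d) ℝ)

theorem Q_transpose : S.Qᵀ = S.Q := S.hQ.isHermitian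
theorem Ru_transpose : S.Ruᵀ = S.Ru := S.hRu.isHermitian
theorem Rv_transpose : S.Rvᵀ = S.Rv := S.hRv.isHermitian

theorem P_transpose : (S.P K L)ᵀ = S.P K L := by
  simp only [P, Matrix.transpose_tsum, Matrix.transpose_mul, Matrix.transpose_pow,
    Matrix.transpose_transpose, Matrix.transpose_add, Matrix.transpose_sub, Q_transpose,
    Ru_transpose, Rv_transpose, Matrix.mul_assoc]

theorem P_lyapunov (h : S.IsStabilizing K L) :
    S.P K L = S.Q + Kᵀ * S.Ru * K - Lᵀ * S.Rv * L + (S.cl K L)ᵀ * S.P K L * S.cl K L := by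
  have hs := summable_lyapunov (S.cl K L) (S.Q + Kᵀ * S.Ru * K - Lᵀ * S.Rv * L) h
  have hshift : (S.cl K L)ᵀ * S.P K L * S.cl K L = ∑' t : ℕ, ((S.cl K L)ᵀ) ^ (t + 1) *
      (S.Q + Kᵀ * S.Ru * K - Lᵀ * S.Rv * L) * (S.cl K L) ^ (t + 1) := by
    rw [P, ← hs.tsum_mul_left, ← (hs.mul_left _).tsum_mul_right]
    refine tsum_congr fun t => ?_
    rw [pow_succ', pow_succ]
    simp only [Matrix.mul_assoc]
  rw [hshift, P, hs.tsum_eq_zero_add]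
  simp

end LQ

theorem dotProduct_mulVec_symm {n : ℕ} {M : Matrix (Fin n) (Fin n) ℝ} (hM : Mᵀ = M)
    (u v : Fin n → ℝ) : u ⬝ᵥ (M *ᵥ v) = v ⬝ᵥ (M *ᵥ u) := by
  rw [Matrix.dotProduct_mulVec, ← Matrix.mulVec_transpose, hM, dotProduct_comm]

theorem dotProduct_transpose_mulVec_eq {m n : ℕ} (M : Matrix (Fin m) (Fin n) ℝ)
    (u : Fin n → ℝ) (v : Fin m → ℝ) : u ⬝ᵥ (Mᵀ *ᵥ v) = (M *ᵥ u) ⬝ᵥ v := by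
  rw [Matrix.dotProduct_mulVec, Matrix.vecMul_transpose]

open LQ in
/-- Advantage expansion: for stabilizing `(K,L)` with `P = P_{K,L}`, for all `x, K', L'`:
`A_{K,L}(x, -K'x, -L'x) = 2xᵀ(K'-K)ᵀE_{K,L}x + xᵀ(K'-K)ᵀ(Rᵘ+BᵀPB)(K'-K)x
  + 2xᵀ(L'-L)ᵀF_{K,L}x + xᵀ(L'-L)ᵀ(-Rᵛ+CᵀPC)(L'-L)x + 2xᵀ(L'-L)ᵀCᵀPB(K'-K)x`. -/
theorem advantage_expansion {d m₁ m₂ : ℕ} (S : LQ d m₁ m₂)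
    (K : Matrix (Fin m₁) (Fin d) ℝ) (L : Matrix (Fin m₂) (Fin d) ℝ)
    (hKL : S.IsStabilizing K L)
    (x : Fin d → ℝ) (K' : Matrix (Fin m₁) (Fin d) ℝ) (L' : Matrix (Fin m₂) (Fin d) ℝ) :
    S.Adv K L x (-(K' *ᵥ x)) (-(L' *ᵥ x)) =
      2 * (x ⬝ᵥ (((K' - K)ᵀ * S.E K L) *ᵥ x))
      + x ⬝ᵥ (((K' - K)ᵀ * (S.Ru + (S.B)ᵀ * S.P K L * S.B) * (K' - K)) *ᵥ x)
      + 2 * (x ⬝ᵥ (((L' - L)ᵀ * S.F K L) *ᵥ x))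
      + x ⬝ᵥ (((L' - L)ᵀ * (-S.Rv + (S.C)ᵀ * S.P K L * S.C) * (L' - L)) *ᵥ x)
      + 2 * (x ⬝ᵥ (((L' - L)ᵀ * (S.C)ᵀ * S.P K L * S.B * (K' - K)) *ᵥ x)) := by
  have hlyap := congrArg (fun M => x ⬝ᵥ (M *ᵥ x)) (S.P_lyapunov K L hKL)
  have hP := dotProduct_mulVec_symm (S.P_transpose K L)
  have hRu := dotProduct_mulVec_symm S.Ru_transpose
  have hRv := dotProduct_mulVec_symm S.Rv_transpose
  unfold Adv E F
  unfold cl at hlyap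
  generalize S.P K L = P at *
  obtain ⟨D, rfl⟩ : ∃ D, K' = K + D := ⟨K' - K, by abel⟩
  obtain ⟨G, rfl⟩ : ∃ G, L' = L + G := ⟨L' - L, by abel⟩
  simp only [add_sub_cancel_left, ← Matrix.mulVec_mulVec, Matrix.add_mulVec, Matrix.sub_mulVec,
    Matrix.neg_mulVec, Matrix.mulVec_add, Matrix.mulVec_sub, Matrix.mulVec_neg, dotProduct_add,
    dotProduct_sub, dotProduct_neg, add_dotProduct, sub_dotProduct, neg_dotProduct,
    dotProduct_transpose_mulVec_eq] at hlyap ⊢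
  -- Each cross term of a symmetric form is brought to one order of its two arguments.
  rw [hRu (K *ᵥ x) (D *ᵥ x), hRv (L *ᵥ x) (G *ᵥ x)]
  simp only [hP (S.A *ᵥ x) (S.B *ᵥ _), hP (S.A *ᵥ x) (S.C *ᵥ _), hP (S.B *ᵥ _) (S.C *ᵥ _),
    hP (S.B *ᵥ K *ᵥ x) (S.B *ᵥ D *ᵥ x), hP (S.C *ᵥ L *ᵥ x) (S.C *ᵥ G *ᵥ x)] at hlyap ⊢
  linarith
end
end

section
/- Suppose (K*,L*) is stabilizing with P* := P_{K*,L*} positive definite, E_{K*,L*} = 0, F_{K*,L*} = 0, and Rᵛ − CᵀP*C positive definite. Let L ∈ ℝ^{m₂×d} be such that (K*,L) is stabilizing, and let P be a symmetric positive definite solution of the inner Riccati equation for L with ρ(Ã_L − B·K_P(L)) < 1, where K_P(L) := (Rᵘ + BᵀPB)⁻¹BᵀPÃ_L. Then Q − LᵀRᵛL ⪯ P ⪯ P*. -/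
/-!
For symmetric `X` and `R`, completing the square in the gain shows that, when
`(R + BᵀXB) K = BᵀXT`, one has for every gain `K'`
`K'ᵀRK' + (T - BK')ᵀX(T - BK') = TᵀXT - TᵀXBK + (K' - K)ᵀ(R + BᵀXB)(K' - K)`
(`complete_square`). It is used twice: with `X = P` and the input `B`, where the Riccati equation
says that `K = K_P(L)` is the critical gain, and with `X = P*`, the input `C` and the weight `-Rᵛ`,
where `F = 0` says that `L*` is critical.

The choice `K' = K = K_P(L)` in the first identity gives
`P - (Q - LᵀRᵛL) = KᵀRᵘK + (A - BK - CL)ᵀP(A - BK - CL) ⪰ 0`, the lower bound. For the upper bound, write both identities for the closed loop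
`M = A - BK* - CL`. Their difference is the Stein equation
`D - MᵀDM = (L - L*)ᵀ(Rᵛ - CᵀP*C)(L - L*) + (K* - K_P(L))ᵀ(Rᵘ + BᵀPB)(K* - K_P(L))`
for `D = P* - P`. The right side is positive semidefinite and `M` is stable, so
`D ⪰ (Mᵀ)ⁿDMⁿ → 0` (`posSemidef_of_stein`). Stability enters through Gelfand's formula, which
makes the entries of `Mⁿ` decay geometrically (`eventually_abs_pow_le`); this also gives the
convergence of the series defining `P*`, hence its Lyapunov equation (`LQ.P_lyapunov`).
-/

open Matrix

noncomputable section

/-! ### Stable matrices and Lyapunov equations -/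

section Decay

attribute [local instance] Matrix.linftyOpNormedRing Matrix.linftyOpNormedAlgebra

/-- Gelfand's formula, read off entrywise so that no matrix norm appears in the conclusion. -/
lemma eventually_abs_pow_le {n : ℕ} (M : Matrix (Fin n) (Fin n) ℝ) (h : specRad M < 1) :
    ∃ r : ℝ, 0 ≤ r ∧ r < 1 ∧ ∀ᶠ t : ℕ in Filter.atTop, ∀ i j, |(M ^ t) i j| ≤ r ^ t := by
  obtain ⟨r, hr, hr1⟩ := ENNReal.lt_iff_exists_nnreal_btwn.1 h
  refine ⟨r, r.2, by exact_mod_cast hr1, ?_⟩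
  have hg := spectrum.pow_nnnorm_pow_one_div_tendsto_nhds_spectralRadius
    (M.map (algebraMap ℝ ℂ))
  filter_upwards [hg.eventually_lt_const hr, Filter.eventually_gt_atTop 0] with t ht ht0 i j
  have hpow : ‖(M.map (algebraMap ℝ ℂ)) ^ t‖₊ ≤ r ^ t := by
    have h1 := ENNReal.rpow_le_rpow ht.le (Nat.cast_nonneg (α := ℝ) t)
    rw [← ENNReal.rpow_mul, one_div, inv_mul_cancel₀ (by positivity), ENNReal.rpow_one,
      ENNReal.rpow_natCast] at h1
    exact_mod_cast h1
  have hent : ‖((M.map (algebraMap ℝ ℂ)) ^ t) i j‖₊ ≤ ‖(M.map (algebraMap ℝ ℂ)) ^ t‖₊ := by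
    rw [Matrix.linfty_opNNNorm_def]
    exact (Finset.single_le_sum (f := fun j => ‖((M.map (algebraMap ℝ ℂ)) ^ t) i j‖₊)
      (fun _ _ => zero_le) (Finset.mem_univ j)).trans
      (Finset.le_sup (f := fun i => ∑ j, ‖((M.map (algebraMap ℝ ℂ)) ^ t) i j‖₊)
        (Finset.mem_univ i))
  have hmap : (M.map (algebraMap ℝ ℂ)) ^ t = (M ^ t).map (algebraMap ℝ ℂ) :=
    (map_pow (algebraMap ℝ ℂ).mapMatrix M t).symm
  have h2 := hent.trans hpow
  rw [hmap] at h2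
  have h3 : ‖(((M ^ t) i j : ℝ) : ℂ)‖ ≤ (r : ℝ) ^ t := NNReal.coe_le_coe.2 h2
  rwa [Complex.norm_real, Real.norm_eq_abs] at h3

end Decay

lemma summable_conj_pow {n : ℕ} (M X : Matrix (Fin n) (Fin n) ℝ) (h : specRad M < 1) :
    Summable fun t : ℕ => (Mᵀ) ^ t * X * M ^ t := by
  obtain ⟨r, hr0, hr1, hev⟩ := eventually_abs_pow_le M h
  refine Pi.summable.2 fun i => Pi.summable.2 fun j => ?_
  refine Summable.of_norm_bounded_eventually_nat
    (g := fun t => (∑ l, ∑ k, |X k l|) * r ^ t)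
    ((summable_geometric_of_lt_one hr0 hr1).mul_left _) ?_
  filter_upwards [hev] with t ht
  have hrt : 0 ≤ r ^ t := pow_nonneg hr0 t
  have hrt1 : r ^ t ≤ 1 := pow_le_one₀ hr0 hr1.le
  rw [← Matrix.transpose_pow, Matrix.mul_apply, Finset.sum_mul, Real.norm_eq_abs]
  refine (Finset.abs_sum_le_sum_abs _ _).trans (Finset.sum_le_sum fun l _ => ?_)
  rw [Matrix.mul_apply, Finset.sum_mul, Finset.sum_mul]
  refine (Finset.abs_sum_le_sum_abs _ _).trans (Finset.sum_le_sum fun k _ => ?_)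
  rw [Matrix.transpose_apply, abs_mul, abs_mul]
  calc |(M ^ t) k i| * |X k l| * |(M ^ t) l j|
      ≤ 1 * |X k l| * r ^ t := by
        gcongr
        · exact (ht k i).trans hrt1
        · exact ht l j
    _ = |X k l| * r ^ t := by rw [one_mul]

/-- The series defining `P_{K,L}` converges and solves the Lyapunov equation. -/
lemma LQ.P_lyapunov_s7 {d m₁ m₂ : ℕ} (S : LQ d m₁ m₂) (K : Matrix (Fin m₁) (Fin d) ℝ)
    (L : Matrix (Fin m₂) (Fin d) ℝ) (h : S.IsStabilizing K L) :
    S.P K L = (S.Q + Kᵀ * S.Ru * K - Lᵀ * S.Rv * L) +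
      (S.cl K L)ᵀ * S.P K L * S.cl K L := by
  have hs := summable_conj_pow (S.cl K L) (S.Q + Kᵀ * S.Ru * K - Lᵀ * S.Rv * L) h
  unfold LQ.P
  rw [← hs.tsum_mul_left, ← (hs.mul_left _).tsum_mul_right, hs.tsum_eq_zero_add]
  congr 1
  · simp
  · refine tsum_congr fun t => ?_
    rw [pow_succ' (S.cl K L)ᵀ, pow_succ (S.cl K L)]
    simp only [Matrix.mul_assoc]

/-- A symmetric solution of a Stein equation with stable `M` and positive semidefinite right-hand
side is positive semidefinite. -/
lemma posSemidef_of_stein {n : ℕ} {M D : Matrix (Fin n) (Fin n) ℝ} (hM : specRad M < 1)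
    (hD : D.IsHermitian) (h : (D - Mᵀ * D * M).PosSemidef) : D.PosSemidef := by
  have key : ∀ t : ℕ, (D - (Mᵀ) ^ t * D * M ^ t).PosSemidef := by
    intro t
    induction t with
    | zero => simpa using Matrix.PosSemidef.zero
    | succ t ih =>
      have h1 := h.conjTranspose_mul_mul_same (M ^ t)
      rw [Matrix.conjTranspose_eq_transpose_of_trivial, Matrix.transpose_pow] at h1
      have h2 := ih.add h1
      have e : D - (Mᵀ) ^ (t + 1) * D * M ^ (t + 1) =
          D - (Mᵀ) ^ t * D * M ^ t + (Mᵀ) ^ t * (D - Mᵀ * D * M) * M ^ t := by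
        rw [pow_succ Mᵀ, pow_succ' M]
        noncomm_ring
      rwa [e]
  have hlim := (summable_conj_pow M D hM).tendsto_atTop_zero
  refine Matrix.PosSemidef.of_dotProduct_mulVec_nonneg hD fun x => ?_
  have hcont : Continuous fun Y : Matrix (Fin n) (Fin n) ℝ => star x ⬝ᵥ ((D - Y) *ᵥ x) := by
    fun_prop
  have hl := (hcont.tendsto 0).comp hlim
  rw [sub_zero] at hl
  exact ge_of_tendsto' hl fun t => (key t).dotProduct_mulVec_nonneg x

/-! ### Completing the square -/

/-- Completion of the square in the gain `K'` around the critical gain `K`. The weight `R` is not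
assumed to have a sign. -/
lemma complete_square {d m : ℕ} {X T : Matrix (Fin d) (Fin d) ℝ} {B : Matrix (Fin d) (Fin m) ℝ}
    {R : Matrix (Fin m) (Fin m) ℝ} {K : Matrix (Fin m) (Fin d) ℝ} (hX : Xᵀ = X) (hR : Rᵀ = R)
    (hK : (R + Bᵀ * X * B) * K = Bᵀ * X * T) (K' : Matrix (Fin m) (Fin d) ℝ) :
    K'ᵀ * R * K' + (T - B * K')ᵀ * X * (T - B * K') =
      Tᵀ * X * T - Tᵀ * X * B * K + (K' - K)ᵀ * (R + Bᵀ * X * B) * (K' - K) := by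
  have hK' : Kᵀ * (R + Bᵀ * X * B) = Tᵀ * X * B := by
    have := congrArg Matrix.transpose hK
    simpa [Matrix.transpose_mul, hX, hR, Matrix.mul_assoc] using this
  have e : (K' - K)ᵀ * (R + Bᵀ * X * B) * (K' - K) =
      K'ᵀ * (R + Bᵀ * X * B) * K' - K'ᵀ * (Bᵀ * X * T) - Tᵀ * X * B * K' + Tᵀ * X * B * K := by
    rw [← hK', ← hK, Matrix.transpose_sub]
    simp only [Matrix.sub_mul, Matrix.mul_sub, Matrix.mul_assoc]
    abel
  rw [e]
  simp only [Matrix.transpose_sub, Matrix.transpose_mul, Matrix.sub_mul, Matrix.mul_sub,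
    Matrix.add_mul, Matrix.mul_add, Matrix.mul_assoc]
  abel

/-! ### Bounds for the Riccati solution -/

open LQ in
/-- Boundedness of inner Riccati solutions: under the Nash-equilibrium conditions on `(K*, L*)`
with `P* = P_{K*,L*}`, any symmetric positive definite solution `P` of the inner Riccati
equation for `L` (with `ρ(Ã_L - B K_P(L)) < 1`, and `(K*, L)` stabilizing) satisfies
`Q - LᵀRᵛL ⪯ P ⪯ P*`. -/
theorem riccati_solution_bounds {d m₁ m₂ : ℕ} (S : LQ d m₁ m₂)
    (Ks : Matrix (Fin m₁) (Fin d) ℝ) (Ls : Matrix (Fin m₂) (Fin d) ℝ)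
    (hKLs : S.IsStabilizing Ks Ls) (hPs : (S.P Ks Ls).PosDef)
    (hE : S.E Ks Ls = 0) (hF : S.F Ks Ls = 0)
    (hRv : (S.Rv - (S.C)ᵀ * S.P Ks Ls * S.C).PosDef)
    (L : Matrix (Fin m₂) (Fin d) ℝ) (hKsL : S.IsStabilizing Ks L)
    (P : Matrix (Fin d) (Fin d) ℝ) (hP : P.PosDef) (hric : S.Riccati L P)
    (hstab : S.IsStabilizing (S.KP L P) L) :
    (P - (S.Q - Lᵀ * S.Rv * L)).PosSemidef ∧ (S.P Ks Ls - P).PosSemidef := by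
  have sym : ∀ {n : ℕ} {Y : Matrix (Fin n) (Fin n) ℝ}, Y.PosDef → Yᵀ = Y := fun hY => by
    simpa [Matrix.conjTranspose_eq_transpose_of_trivial] using hY.isHermitian.eq
  have hG : (S.Ru + (S.B)ᵀ * P * S.B).PosDef := by
    have := hP.posSemidef.conjTranspose_mul_mul_same S.B
    rw [Matrix.conjTranspose_eq_transpose_of_trivial] at this
    exact S.hRu.add_posSemidef this
  have hK : (S.Ru + (S.B)ᵀ * P * S.B) * S.KP L P = (S.B)ᵀ * P * S.At L := by
    unfold LQ.KP
    have hdet : IsUnit (S.Ru + (S.B)ᵀ * P * S.B).det := hG.det_pos.ne'.isUnit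
    simp only [Matrix.mul_assoc] at hdet ⊢
    rw [Matrix.mul_nonsing_inv_cancel_left _ _ hdet]
  -- Riccati equation in completed-square form, valid for every gain `K'` of the first player.
  have hPid : ∀ K' : Matrix (Fin m₁) (Fin d) ℝ,
      K'ᵀ * S.Ru * K' + (S.cl K' L)ᵀ * P * S.cl K' L = P - (S.Q - Lᵀ * S.Rv * L) +
        (K' - S.KP L P)ᵀ * (S.Ru + (S.B)ᵀ * P * S.B) * (K' - S.KP L P) := by
    intro K'
    have hcl : S.cl K' L = S.At L - S.B * K' := by unfold LQ.cl LQ.At; abel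
    have hric' : P - (S.Q - Lᵀ * S.Rv * L) =
        (S.At L)ᵀ * P * S.At L - (S.At L)ᵀ * P * S.B * S.KP L P := by
      have h1 : P = (S.Q - Lᵀ * S.Rv * L) + (S.At L)ᵀ * P * S.At L
          - (S.At L)ᵀ * P * S.B * S.KP L P := by
        have h0 := hric
        unfold LQ.Riccati at h0
        unfold LQ.KP
        simpa only [Matrix.mul_assoc] using h0
      rw [sub_eq_iff_eq_add]
      exact h1.trans (by abel)
    rw [hcl, complete_square (sym hP) (sym S.hRu) hK K', hric']
  have conj : ∀ {m : ℕ} {Y : Matrix (Fin m) (Fin m) ℝ} (Z : Matrix (Fin m) (Fin d) ℝ),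
      Y.PosSemidef → (Zᵀ * Y * Z).PosSemidef := fun Z hY => by
    simpa [Matrix.conjTranspose_eq_transpose_of_trivial] using hY.conjTranspose_mul_mul_same Z
  refine ⟨?_, ?_⟩
  · have h := hPid (S.KP L P)
    rw [sub_self, Matrix.mul_zero, add_zero] at h
    rw [← h]
    exact (conj _ S.hRu.posSemidef).add (conj _ hP.posSemidef)
  · have hlyap := S.P_lyapunov_s7 Ks Ls hKLs
    set X := S.P Ks Ls with hXdef
    have hL : (-S.Rv + (S.C)ᵀ * X * S.C) * Ls = (S.C)ᵀ * X * (S.A - S.B * Ks) :=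
      sub_eq_zero.1 hF
    have hRvs : (-S.Rv)ᵀ = -S.Rv := by rw [Matrix.transpose_neg, sym S.hRv]
    -- At `L*` the square vanishes; subtracting that instance eliminates `TᵀXT - TᵀXCL*` and leaves
    -- the change of `P*`-cost caused by replacing `L*` with `L`.
    have hX1 := complete_square (sym hPs) hRvs hL Ls
    have hX2 := complete_square (sym hPs) hRvs hL L
    rw [sub_self, Matrix.mul_zero, add_zero] at hX1
    rw [← hX1] at hX2
    change
      Lᵀ * -S.Rv * L + (S.cl Ks L)ᵀ * X * S.cl Ks L =
        Lsᵀ * -S.Rv * Ls + (S.cl Ks Ls)ᵀ * X * S.cl Ks Ls + _ at hX2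
    have hP2 := hPid Ks
    refine posSemidef_of_stein hKsL (hPs.isHermitian.sub hP.isHermitian) ?_
    have e : X - P - (S.cl Ks L)ᵀ * (X - P) * S.cl Ks L =
        (L - Ls)ᵀ * (S.Rv - (S.C)ᵀ * X * S.C) * (L - Ls) +
        (Ks - S.KP L P)ᵀ * (S.Ru + (S.B)ᵀ * P * S.B) * (Ks - S.KP L P) := by
      have h2 : (L - Ls)ᵀ * (-S.Rv + (S.C)ᵀ * X * S.C) * (L - Ls) =
          -((L - Ls)ᵀ * (S.Rv - (S.C)ᵀ * X * S.C) * (L - Ls)) := by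
        rw [← Matrix.neg_mul, ← Matrix.mul_neg]
        congr 2
        abel
      rw [h2] at hX2
      simp only [Matrix.mul_neg, Matrix.neg_mul] at hX2
      rw [Matrix.mul_sub, Matrix.sub_mul]
      generalize (L - Ls)ᵀ * (S.Rv - (S.C)ᵀ * X * S.C) * (L - Ls) = U at *
      generalize (Ks - S.KP L P)ᵀ * (S.Ru + (S.B)ᵀ * P * S.B) * (Ks - S.KP L P) = V at *
      linear_combination (norm := module) hlyap - hX2 + hP2
    rw [e]
    exact (conj _ hRv.posSemidef).add (conj _ hG.posSemidef)
end
end
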